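/- ψ(4/5) = −γ + (π/2)·√(1 + 2/√5) − (5/4)·ln 5 − (√5/4)·ln((3 + √5)/2), where ψ is the digamma function and γ is the Euler–Mascheroni constant. (This is the corrected form of Jensen's erroneous formula for ψ(4/5).) -/

import Mathlib

noncomputable def digamma (x : ℝ) : ℝ := deriv Real.Gamma x / Real.Gamma x

/-!
The argument is Gauss's evaluation of `digamma` at a rational point `p / q` of `(0, 1)`. The odd
part `digamma (1 - p / q) - digamma (p / q)` is the logarithmic derivative of Euler's reflection
formula. For the even part, write `digamma x + γ` as the limit of `∑ (1 / (k + 1) - 1 / (k + x))`.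
At `x = p / q` the denominators `k + p / q` run over a residue class modulo `q` divided by `q`, and
detecting the class by `q`-th roots of unity produces partial sums of
`∑ cos (n θ) / n = -log |2 sin (θ / 2)|`, the real part of the logarithmic series on `|z| = 1`.

For `q = 5` only two logarithms occur, `log (2 sin (π / 5))` and `log (2 sin (2π / 5))`. Their sum
comes from `∏ 2 sin (π j / 5) = 5`, and their difference is the logarithm of
`2 cos (π / 5) = (1 + √5) / 2`, whose square is `(3 + √5) / 2`.
-/

section

open Real Filter Topology Finset

theorem digamma_eq_logDeriv : digamma = logDeriv Gamma := rfl

theorem digamma_one : digamma 1 = -eulerMascheroniConstant := by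
  rw [digamma, hasDerivAt_Gamma_one.deriv, Gamma_one, div_one]

theorem digamma_add_one {x : ℝ} (hx : ∀ m : ℕ, x ≠ -m) : digamma (x + 1) = digamma x + 1 / x := by
  have hx0 : x ≠ 0 := by simpa using hx 0
  have hrec : (fun y ↦ Gamma (y + 1)) =ᶠ[𝓝 x] fun y ↦ y * Gamma y := by
    filter_upwards [eventually_ne_nhds hx0] with y hy using Gamma_add_one hy
  calc digamma (x + 1) = logDeriv (fun y ↦ Gamma (y + 1)) x := by
        rw [digamma, logDeriv_apply, deriv_comp_add_const]
    _ = logDeriv (fun y ↦ y * Gamma y) x := (logDeriv_congr_nhds hrec).eq_of_nhds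
    _ = digamma x + 1 / x := by
        rw [logDeriv_mul x hx0 (Gamma_ne_zero hx) differentiableAt_fun_id
          (differentiableAt_Gamma hx), logDeriv_id', digamma_eq_logDeriv, add_comm]

theorem digamma_add_natCast {x : ℝ} (hx : ∀ m : ℕ, x ≠ -m) (n : ℕ) :
    digamma (x + n) = digamma x + ∑ k ∈ range n, 1 / (x + k) := by
  induction n with
  | zero => simp
  | succ n ih =>
    have hxn : ∀ m : ℕ, x + n ≠ -m := fun m h ↦ hx (n + m) (by push_cast; linarith)
    rw [Nat.cast_succ, ← add_assoc, digamma_add_one hxn, ih, sum_range_succ, add_assoc]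

theorem ne_neg_natCast_of_pos {x : ℝ} (hx : 0 < x) (m : ℕ) : x ≠ -m := by
  linarith [m.cast_nonneg (α := ℝ)]

theorem monotoneOn_digamma : MonotoneOn digamma (Set.Ioi 0) := by
  have hΓ : ∀ x ∈ Set.Ioi (0 : ℝ), DifferentiableAt ℝ Gamma x := fun x hx ↦
    differentiableAt_Gamma (ne_neg_natCast_of_pos hx)
  have hne : ∀ x ∈ Set.Ioi (0 : ℝ), Gamma x ≠ 0 := fun x hx ↦ (Gamma_pos_of_pos hx).ne'
  refine (convexOn_log_Gamma.monotoneOn_deriv fun x hx ↦ (hΓ x hx).log (hne x hx)).congr ?_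
  exact fun x hx ↦ deriv.log (hΓ x hx) (hne x hx)

theorem digamma_reflection {x : ℝ} (hx : ∀ n : ℤ, x ≠ n) :
    digamma (1 - x) - digamma x = π * cot (π * x) := by
  have hx₁ : ∀ m : ℕ, x ≠ -m := fun m ↦ by exact_mod_cast hx (-m)
  have hx₂ : ∀ m : ℕ, 1 - x ≠ -m := fun m h ↦ hx (m + 1) (by push_cast; linarith)
  have hsin : sin (π * x) ≠ 0 :=
    sin_ne_zero_iff.mpr fun n h ↦ hx n (mul_left_cancel₀ pi_ne_zero (by linarith))
  have hleft : logDeriv (fun y ↦ Gamma y * Gamma (1 - y)) x = digamma x - digamma (1 - x) := by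
    have hcomp : logDeriv (Gamma ∘ (1 - ·)) x = -digamma (1 - x) := by
      rw [logDeriv_comp (differentiableAt_Gamma hx₂) (by fun_prop), deriv_const_sub, deriv_id'',
        mul_neg_one, digamma_eq_logDeriv]
    refine (logDeriv_mul (g := Gamma ∘ (1 - ·)) x (Gamma_ne_zero hx₁) (Gamma_ne_zero hx₂)
      (differentiableAt_Gamma hx₁) ((differentiableAt_Gamma hx₂).comp x (by fun_prop))).trans ?_
    rw [hcomp, digamma_eq_logDeriv, ← sub_eq_add_neg]
  have hright : logDeriv (fun y ↦ π / sin (π * y)) x = -(π * cot (π * x)) := by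
    have hcomp : logDeriv (sin ∘ (π * ·)) x = cot (π * x) * π := by
      rw [logDeriv_comp (by fun_prop) (by fun_prop), deriv_const_mul_id, logDeriv_apply,
        Real.deriv_sin, cot_eq_cos_div_sin]
    refine (logDeriv_div (f := fun _ ↦ π) (g := sin ∘ (π * ·)) x pi_ne_zero hsin (by fun_prop)
      (by fun_prop)).trans ?_
    rw [hcomp, logDeriv_const, Pi.zero_apply, zero_sub, mul_comm]
  simp_rw [Gamma_mul_Gamma_one_sub] at hleft
  linarith

theorem tendsto_digamma_add_natCast_sub_digamma_natCast {x : ℝ} (hx : 0 ≤ x) :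
    Tendsto (fun n : ℕ ↦ digamma (x + n) - digamma n) atTop (𝓝 0) := by
  have hbound : Tendsto (fun n : ℕ ↦ ∑ k ∈ range ⌈x⌉₊, 1 / ((n : ℝ) + k)) atTop (𝓝 0) := by
    rw [← sum_const_zero (s := range ⌈x⌉₊)]
    refine tendsto_finsetSum _ fun k _ ↦ ?_
    exact_mod_cast (tendsto_add_atTop_iff_nat k).mpr (tendsto_one_div_atTop_nhds_zero_nat (𝕜 := ℝ))
  refine tendsto_of_tendsto_of_tendsto_of_le_of_le' tendsto_const_nhds hbound ?_ ?_ <;>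
    filter_upwards [eventually_gt_atTop 0] with n hn
  · have hn' : (0 : ℝ) < n := by exact_mod_cast hn
    exact sub_nonneg.mpr (monotoneOn_digamma hn' (Set.mem_Ioi.mpr (by positivity)) (by linarith))
  · have hn' : (0 : ℝ) < n := by exact_mod_cast hn
    rw [sub_le_iff_le_add', ← digamma_add_natCast (ne_neg_natCast_of_pos hn'), add_comm]
    have hceil := Nat.le_ceil x
    exact monotoneOn_digamma (Set.mem_Ioi.mpr (by positivity)) (Set.mem_Ioi.mpr (by positivity))
      (by gcongr)

theorem tendsto_sum_sub_digamma {x : ℝ} (hx : 0 < x) :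
    Tendsto (fun n : ℕ ↦ ∑ k ∈ range n, (1 / ((k : ℝ) + 1) - 1 / (k + x))) atTop
      (𝓝 (digamma x + eulerMascheroniConstant)) := by
  have hsum : ∀ n : ℕ, ∑ k ∈ range n, (1 / ((k : ℝ) + 1) - 1 / (k + x)) =
      digamma x + eulerMascheroniConstant
        + ((digamma (1 + n) - digamma n) - (digamma (x + n) - digamma n)) := fun n ↦ by
    rw [digamma_add_natCast (ne_neg_natCast_of_pos one_pos),
      digamma_add_natCast (ne_neg_natCast_of_pos hx), digamma_one, sum_sub_distrib]
    simp only [add_comm (1 : ℝ), add_comm x]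
    ring
  simp_rw [hsum]
  simpa using ((tendsto_digamma_add_natCast_sub_digamma_natCast zero_le_one).sub
    (tendsto_digamma_add_natCast_sub_digamma_natCast hx.le)).const_add
      (digamma x + eulerMascheroniConstant)

-- The term `n = 0` is `1 / 0 = 0`, so these are the partial sums of `∑ zⁿ / n` over `1 ≤ n`.
theorem cauchySeq_sum_pow_div {z : ℂ} (hz : ‖z‖ ≤ 1) (hz1 : z ≠ 1) :
    CauchySeq fun N : ℕ ↦ ∑ n ∈ range N, z ^ n / n := by
  have hbound : ∀ N : ℕ, ‖∑ n ∈ range N, z ^ (n + 1)‖ ≤ 2 / ‖z - 1‖ := fun N ↦ by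
    have hgeom : ∑ n ∈ range N, z ^ (n + 1) = z * ((z ^ N - 1) / (z - 1)) := by
      simp_rw [pow_succ', ← mul_sum, geom_sum_eq hz1]
    calc ‖∑ n ∈ range N, z ^ (n + 1)‖ = ‖z‖ * (‖z ^ N - 1‖ / ‖z - 1‖) := by
          rw [hgeom, norm_mul, norm_div]
      _ ≤ 1 * (2 / ‖z - 1‖) := by
          have hpow : ‖z ^ N - 1‖ ≤ 2 := calc
            ‖z ^ N - 1‖ ≤ ‖z‖ ^ N + 1 := by simpa using norm_sub_le (z ^ N) 1
            _ ≤ 2 := by linarith [pow_le_one₀ (n := N) (norm_nonneg z) hz]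
          gcongr
      _ = 2 / ‖z - 1‖ := one_mul _
  have hanti : Antitone fun n : ℕ ↦ 1 / ((n : ℝ) + 1) := fun m n h ↦
    one_div_le_one_div_of_le (by positivity) (by gcongr)
  have hcauchy := hanti.cauchySeq_series_mul_of_tendsto_zero_of_bounded
    tendsto_one_div_add_atTop_nhds_zero_nat hbound
  rw [← cauchySeq_shift 1]
  convert hcauchy using 2 with N
  rw [sum_range_succ']
  simp [div_eq_inv_mul]

theorem tendsto_sum_pow_div {z : ℂ} (hz : ‖z‖ ≤ 1) (hz1 : z ≠ 1) :
    Tendsto (fun N : ℕ ↦ ∑ n ∈ range N, z ^ n / n) atTop (𝓝 (-Complex.log (1 - z))) := by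
  obtain ⟨l, hl⟩ := cauchySeq_tendsto_of_complete (cauchySeq_sum_pow_div hz hz1)
  -- Abel's theorem transports the identity from the open disc to the boundary point `z`.
  have habel : Tendsto (fun t : ℝ ↦ -Complex.log (1 - z * t)) (𝓝[<] 1) (𝓝 l) := by
    refine ((Complex.tendsto_tsum_powerSeries_nhdsWithin_lt hl).comp tendsto_map).congr' ?_
    filter_upwards [Ioo_mem_nhdsLT (show (-1 : ℝ) < 1 by norm_num)] with t ht
    have hzt : ‖z * t‖ < 1 := by
      rw [norm_mul, Complex.norm_real]
      exact (mul_le_of_le_one_left (norm_nonneg _) hz).trans_lt (abs_lt.mpr ht)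
    rw [← (Complex.hasSum_taylorSeries_neg_log hzt).tsum_eq]
    simp only [Function.comp_apply, mul_pow, div_mul_eq_mul_div]
  have hslit : 1 - z ∈ Complex.slitPlane := by
    rcases ((Complex.re_le_norm z).trans hz).lt_or_eq with hre | hre
    · exact .inl (by simpa using hre)
    · exact .inr fun him ↦ hz1 (Complex.ext hre (by simpa using him))
  have hcont : Tendsto (fun t : ℝ ↦ -Complex.log (1 - z * t)) (𝓝[<] 1)
      (𝓝 (-Complex.log (1 - z))) := by
    have : ContinuousAt (fun t : ℝ ↦ -Complex.log (1 - z * t)) 1 :=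
      (ContinuousAt.clog (by fun_prop) (by simpa using hslit)).neg
    simpa using this.tendsto.mono_left nhdsWithin_le_nhds
  exact tendsto_nhds_unique habel hcont ▸ hl

theorem norm_one_sub_exp_I_mul (θ : ℝ) :
    ‖1 - Complex.exp (Complex.I * θ)‖ = |2 * sin (θ / 2)| := by
  rw [norm_sub_rev, Complex.norm_exp_I_mul_ofReal_sub_one, norm_eq_abs]

theorem tendsto_sum_cos_div {θ : ℝ} (hθ : sin (θ / 2) ≠ 0) :
    Tendsto (fun N : ℕ ↦ ∑ n ∈ range N, cos ((n + 1) * θ) / (n + 1)) atTop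
      (𝓝 (-log (2 * sin (θ / 2)))) := by
  have hnorm : ‖Complex.exp (Complex.I * θ)‖ = 1 := by
    rw [mul_comm, Complex.norm_exp_ofReal_mul_I]
  have hne : Complex.exp (Complex.I * θ) ≠ 1 := fun h ↦ hθ <| by
    simpa [h] using norm_one_sub_exp_I_mul θ
  have hlim := (Complex.continuous_re.tendsto _).comp
    ((tendsto_add_atTop_iff_nat 1).mpr (tendsto_sum_pow_div hnorm.le hne))
  rw [Complex.neg_re, Complex.log_re, norm_one_sub_exp_I_mul, log_abs] at hlim
  refine hlim.congr fun N ↦ ?_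
  have hterm : ∀ n : ℕ, (Complex.exp (Complex.I * θ) ^ (n + 1) / ((n + 1 : ℕ) : ℂ)).re =
      cos ((n + 1) * θ) / (n + 1) := fun n ↦ by
    have hexp : Complex.exp (Complex.I * θ) ^ (n + 1) =
        Complex.exp (((n + 1) * θ : ℝ) * Complex.I) := by
      rw [← Complex.exp_nat_mul]
      push_cast
      ring_nf
    rw [hexp, Complex.div_natCast_re, Complex.exp_ofReal_mul_I_re, Nat.cast_succ]
  simp [sum_range_succ', hterm, -Nat.cast_add]

theorem sum_pow_zpow_eq_ite {K : Type*} [Field K] {ζ : K} {q : ℕ} (hζ : IsPrimitiveRoot ζ q)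
    (m : ℤ) : ∑ j ∈ range q, (ζ ^ m) ^ j = if (q : ℤ) ∣ m then (q : K) else 0 := by
  split_ifs with h
  · simp [(hζ.zpow_eq_one_iff_dvd m).mpr h]
  · have hne : ζ ^ m ≠ 1 := mt (hζ.zpow_eq_one_iff_dvd m).mp h
    have hpow : (ζ ^ m) ^ q = 1 := by
      rw [← zpow_natCast, zpow_comm, zpow_natCast, hζ.pow_eq_one, one_zpow]
    rw [geom_sum_eq hne, hpow, sub_self, zero_div]

theorem sum_cos_two_pi_mul_div {q : ℕ} (hq : q ≠ 0) (m : ℤ) :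
    ∑ j ∈ range q, cos (2 * π * j * m / q) = if (q : ℤ) ∣ m then (q : ℝ) else 0 := by
  have hexp : ∀ j : ℕ, (Complex.exp (2 * π * Complex.I / q) ^ m) ^ j =
      Complex.exp ((2 * π * j * m / q : ℝ) * Complex.I) := fun j ↦ by
    rw [← Complex.exp_int_mul, ← Complex.exp_nat_mul]
    push_cast
    ring_nf
  have hsum := congrArg Complex.re (sum_pow_zpow_eq_ite (Complex.isPrimitiveRoot_exp q hq) m)
  simp_rw [hexp, Complex.re_sum, Complex.exp_ofReal_mul_I_re] at hsum
  rw [hsum]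
  split_ifs <;> simp

theorem prod_abs_two_mul_sin (n : ℕ) :
    ∏ j ∈ range n, |2 * sin (π * (j + 1) / (n + 1))| = n + 1 := by
  have hprod := (Complex.isPrimitiveRoot_exp (n + 1) n.succ_ne_zero).prod_one_sub_pow_eq_order
  have hfactor : ∀ j : ℕ, ‖1 - Complex.exp (2 * π * Complex.I / (n + 1 : ℕ)) ^ (j + 1)‖ =
      |2 * sin (π * (j + 1) / (n + 1))| := fun j ↦ by
    rw [← Complex.exp_nat_mul,
      show π * ((j : ℝ) + 1) / (n + 1) = (2 * π * (j + 1) / (n + 1)) / 2 by ring,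
      ← norm_one_sub_exp_I_mul]
    push_cast
    ring_nf
  simp_rw [← hfactor, ← norm_prod, hprod]
  exact_mod_cast Complex.norm_natCast (n + 1)

theorem sum_log_two_mul_sin {q : ℕ} (hq : q ≠ 0) :
    ∑ j ∈ Ico 1 q, log (2 * sin (π * j / q)) = log q := by
  obtain ⟨n, rfl⟩ := Nat.exists_eq_succ_of_ne_zero hq
  have hne : ∏ j ∈ range n, |2 * sin (π * (j + 1) / (n + 1))| ≠ 0 := by
    rw [prod_abs_two_mul_sin]
    positivity
  rw [Nat.cast_succ, ← prod_abs_two_mul_sin, log_prod (prod_ne_zero_iff.mp hne),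
    sum_Ico_eq_sum_range, prod_abs_two_mul_sin]
  simp only [log_abs, Nat.succ_sub_one, Nat.cast_add, Nat.cast_one, add_comm (1 : ℝ)]

theorem sum_range_mul_ite_modEq {M : Type*} [AddCommMonoid M] {q r : ℕ} (hr : 0 < r) (hrq : r ≤ q)
    (f : ℕ → M) (N : ℕ) :
    ∑ n ∈ range (q * N), (if n + 1 ≡ r [MOD q] then f (n + 1) else 0) =
      ∑ k ∈ range N, f (q * k + r) := by
  induction N with
  | zero => simp
  | succ N ih =>
    rw [mul_add_one, sum_range_add, ih, sum_range_succ]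
    congr 1
    have hmem : r - 1 ∈ range q := mem_range.mpr (by omega)
    have hmod : ∀ i ∈ range q, (q * N + i + 1 ≡ r [MOD q] ↔ i = r - 1) := fun i hi ↦ by
      have hi' := mem_range.mp hi
      have hshift : q * N + i ≡ i [MOD q] := by simp [Nat.ModEq]
      constructor
      · intro h
        rw [← Nat.sub_add_cancel hr] at h
        exact (hshift.symm.trans (h.add_right_cancel' 1)).eq_of_lt_of_lt hi' (by omega)
      · rintro rfl
        simpa [Nat.sub_add_cancel hr] using hshift.add_right 1
    rw [sum_congr rfl fun i hi ↦ if_congr (hmod i hi) rfl rfl, sum_ite_eq_of_mem' _ _ _ hmem,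
      add_assoc, Nat.sub_add_cancel hr]

theorem sum_one_div_add_div {q r : ℕ} (hr : 0 < r) (hrq : r ≤ q) (N : ℕ) :
    ∑ k ∈ range N, 1 / ((k : ℝ) + r / q) =
      ∑ n ∈ range (q * N), (∑ j ∈ range q, cos (2 * π * j * (n + 1 - r) / q)) / (n + 1) := by
  have hq : q ≠ 0 := by omega
  have hcos : ∀ n : ℕ, (∑ j ∈ range q, cos (2 * π * j * (n + 1 - r) / q)) / ((n : ℝ) + 1) =
      if n + 1 ≡ r [MOD q] then (q : ℝ) / (n + 1 : ℕ) else 0 := fun n ↦ by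
    have hsum := sum_cos_two_pi_mul_div hq ((n + 1 : ℕ) - r)
    simp only [← Nat.modEq_iff_dvd, Nat.ModEq.comm (a := r)] at hsum
    push_cast at hsum ⊢
    rw [hsum, ite_div, zero_div]
  simp_rw [hcos]
  rw [sum_range_mul_ite_modEq hr hrq (fun m ↦ (q : ℝ) / m)]
  refine sum_congr rfl fun k _ ↦ ?_
  push_cast
  field_simp

theorem two_mul_cos_sub_cos_sub_cos {q : ℝ} (hq : q ≠ 0) (m p : ℝ) (j : ℕ) :
    2 * cos (2 * π * j * (m - q) / q) - cos (2 * π * j * (m - p) / q)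
        - cos (2 * π * j * (m - (q - p)) / q) =
      2 * (1 - cos (2 * π * j * p / q)) * cos (m * (2 * π * j / q)) := by
  have hzero : 2 * π * j * (m - q) / q = m * (2 * π * j / q) - j * (2 * π) := by
    field_simp
  have hpos : 2 * π * j * (m - p) / q = m * (2 * π * j / q) - 2 * π * j * p / q := by
    ring
  have hneg : 2 * π * j * (m - (q - p)) / q =
      m * (2 * π * j / q) + 2 * π * j * p / q - j * (2 * π) := by
    field_simp
    ring
  rw [hzero, hpos, hneg, cos_sub_nat_mul_two_pi, cos_sub_nat_mul_two_pi, cos_add, cos_sub]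
  ring

theorem sum_one_div_sub_add_sum_one_div_sub {p q : ℕ} (hp : 0 < p) (hpq : p < q) (N : ℕ) :
    ∑ k ∈ range N, (1 / ((k : ℝ) + 1) - 1 / (k + p / q))
        + ∑ k ∈ range N, (1 / ((k : ℝ) + 1) - 1 / (k + (1 - p / q))) =
      ∑ j ∈ Ico 1 q, 2 * (1 - cos (2 * π * j * p / q)) *
        ∑ n ∈ range (q * N), cos ((n + 1) * (2 * π * j / q)) / (n + 1) := by
  have hq : 0 < q := hp.trans hpq
  have hq' : (q : ℝ) ≠ 0 := by positivity
  have hone := sum_one_div_add_div hq le_rfl N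
  have hdiv := sum_one_div_add_div hp hpq.le N
  have hone_sub := sum_one_div_add_div (Nat.sub_pos_of_lt hpq) (Nat.sub_le q p) N
  rw [div_self hq'] at hone
  rw [Nat.cast_sub hpq.le, sub_div, div_self hq'] at hone_sub
  have hcoeff : ∀ n : ℕ, 2 * ∑ j ∈ range q, cos (2 * π * j * (n + 1 - q) / q)
      - ∑ j ∈ range q, cos (2 * π * j * (n + 1 - p) / q)
      - ∑ j ∈ range q, cos (2 * π * j * (n + 1 - (q - p)) / q) =
      ∑ j ∈ Ico 1 q, 2 * (1 - cos (2 * π * j * p / q)) * cos ((n + 1) * (2 * π * j / q)) :=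
    fun n ↦ by
      rw [mul_sum, ← sum_sub_distrib, ← sum_sub_distrib]
      simp_rw [two_mul_cos_sub_cos_sub_cos hq']
      rw [sum_range_eq_add_Ico _ hq]
      simp
  have hswap : ∑ j ∈ Ico 1 q, 2 * (1 - cos (2 * π * j * p / q)) *
        ∑ n ∈ range (q * N), cos ((n + 1) * (2 * π * j / q)) / (n + 1) =
      ∑ n ∈ range (q * N), (∑ j ∈ Ico 1 q,
        2 * (1 - cos (2 * π * j * p / q)) * cos ((n + 1) * (2 * π * j / q))) / (n + 1) := by
    simp only [mul_sum, sum_div]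
    rw [sum_comm]
    simp only [mul_div_assoc]
  simp_rw [hswap, ← hcoeff, sub_div, sum_sub_distrib, mul_div_assoc (2 : ℝ), ← mul_sum,
    hone, hdiv, hone_sub]
  ring

theorem digamma_add_digamma_one_sub {p q : ℕ} (hp : 0 < p) (hpq : p < q) :
    digamma (p / q) + digamma (1 - p / q) =
      -2 * eulerMascheroniConstant - 2 * log q
        + 2 * ∑ j ∈ Ico 1 q, cos (2 * π * j * p / q) * log (2 * sin (π * j / q)) := by
  have hq : (0 : ℝ) < q := by exact_mod_cast hp.trans hpq
  have hx₀ : (0 : ℝ) < p / q := by positivity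
  have hx₁ : (0 : ℝ) < 1 - p / q := sub_pos.mpr ((div_lt_one hq).mpr (by exact_mod_cast hpq))
  have hangle : ∀ j : ℕ, 2 * π * j / q / 2 = π * j / q := fun j ↦ by ring
  have hsin : ∀ j ∈ Ico 1 q, sin (2 * π * j / q / 2) ≠ 0 := fun j hj ↦ by
    obtain ⟨hj₁, hjq⟩ := mem_Ico.mp hj
    have hjq₀ : (0 : ℝ) < j / q := div_pos (Nat.cast_pos.mpr hj₁) hq
    have hjq₁ : (j : ℝ) / q < 1 := (div_lt_one hq).mpr (by exact_mod_cast hjq)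
    rw [hangle, mul_div_assoc]
    exact (sin_pos_of_pos_of_lt_pi (mul_pos pi_pos hjq₀) (mul_lt_of_lt_one_right pi_pos hjq₁)).ne'
  have hlog := tendsto_finsetSum (Ico 1 q) fun j hj ↦
    ((tendsto_sum_cos_div (hsin j hj)).comp
      (tendsto_id.const_mul_atTop' (hp.trans hpq))).const_mul (2 * (1 - cos (2 * π * j * p / q)))
  have hdigamma := (tendsto_sum_sub_digamma hx₀).add (tendsto_sum_sub_digamma hx₁)
  simp_rw [sum_one_div_sub_add_sum_one_div_sub hp hpq] at hdigamma
  have hlimit := tendsto_nhds_unique hdigamma hlog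
  have hexpand : ∑ j ∈ Ico 1 q, 2 * (1 - cos (2 * π * j * p / q)) * -log (2 * sin (π * j / q)) =
      -2 * ∑ j ∈ Ico 1 q, log (2 * sin (π * j / q))
        + 2 * ∑ j ∈ Ico 1 q, cos (2 * π * j * p / q) * log (2 * sin (π * j / q)) := by
    rw [mul_sum, mul_sum, ← sum_add_distrib]
    exact sum_congr rfl fun j _ ↦ by ring
  simp_rw [hangle] at hlimit
  rw [hexpand, sum_log_two_mul_sin (by omega)] at hlimit
  linarith

theorem digamma_natCast_div_natCast {p q : ℕ} (hp : 0 < p) (hpq : p < q) :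
    digamma (p / q) = -eulerMascheroniConstant - log q - π / 2 * cot (π * (p / q))
      + ∑ j ∈ Ico 1 q, cos (2 * π * j * p / q) * log (2 * sin (π * j / q)) := by
  have hq : (0 : ℝ) < q := by exact_mod_cast hp.trans hpq
  have hnotint : ∀ n : ℤ, (p / q : ℝ) ≠ n := fun n h ↦ by
    have h₀ : (0 : ℝ) < n := h ▸ by positivity
    have h₁ : (n : ℝ) < 1 := h ▸ (div_lt_one hq).mpr (by exact_mod_cast hpq)
    norm_cast at h₀ h₁
    omega
  linarith [digamma_add_digamma_one_sub hp hpq, digamma_reflection hnotint]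

theorem cos_two_mul_pi_div_five : cos (2 * (π / 5)) = (√5 - 1) / 4 := by
  rw [cos_two_mul, cos_pi_div_five]
  linear_combination (1 / 8) * sq_sqrt (show (0 : ℝ) ≤ 5 by norm_num)

theorem cot_pi_div_five : cot (π / 5) = √(1 + 2 / √5) := by
  have hsin : 0 < sin (π / 5) := sin_pos_of_pos_of_lt_pi (by positivity) (by linarith [pi_pos])
  have h5 : √5 ^ 2 = 5 := sq_sqrt (by norm_num)
  have hsinsq : sin (π / 5) ^ 2 = (5 - √5) / 8 := by
    rw [sin_sq, cos_pi_div_five]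
    linear_combination -(1 / 16) * h5
  have hlt : √5 < 5 := by nlinarith [sqrt_nonneg 5]
  have hne : 5 - √5 ≠ 0 := by linarith
  rw [cot_eq_cos_div_sin, cos_pi_div_five, eq_comm,
    sqrt_eq_iff_mul_self_eq (by positivity) (by positivity), ← sq, div_pow, hsinsq]
  field_simp
  linear_combination -(8 * √5 + 32) * h5

theorem sum_mul_log_two_mul_sin_five (c : ℕ → ℝ) :
    ∑ j ∈ Ico 1 5, c j * log (2 * sin (π * j / 5)) =
      (c 1 + c 4) * log (2 * sin (π / 5)) + (c 2 + c 3) * log (2 * sin (2 * (π / 5))) := by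
  have h₂ : π * 2 / 5 = 2 * (π / 5) := by ring
  have h₃ : sin (π * 3 / 5) = sin (2 * (π / 5)) := by
    rw [show π * 3 / 5 = π - 2 * (π / 5) by ring, sin_pi_sub]
  have h₄ : sin (π * 4 / 5) = sin (π / 5) := by
    rw [show π * 4 / 5 = π - π / 5 by ring, sin_pi_sub]
  have hexpand (f : ℕ → ℝ) : ∑ j ∈ Ico 1 5, f j = f 1 + f 2 + f 3 + f 4 := by
    simp [sum_Ico_succ_top]
  rw [hexpand, Nat.cast_one, Nat.cast_ofNat, Nat.cast_ofNat, Nat.cast_ofNat, mul_one, h₂, h₃, h₄]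
  ring

theorem log_two_mul_sin_pi_div_five_add :
    log (2 * sin (π / 5)) + log (2 * sin (2 * (π / 5))) = log 5 / 2 := by
  have hsum := sum_log_two_mul_sin (q := 5) (by norm_num)
  have hfold := sum_mul_log_two_mul_sin_five fun _ ↦ 1
  simp only [one_mul] at hfold
  push_cast at hsum
  linarith

theorem log_two_mul_sin_pi_div_five_sub :
    log (2 * sin (2 * (π / 5))) - log (2 * sin (π / 5)) = log ((3 + √5) / 2) / 2 := by
  have hsin : 0 < sin (π / 5) := sin_pos_of_pos_of_lt_pi (by positivity) (by linarith [pi_pos])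
  have hsq : (3 + √5) / 2 = ((1 + √5) / 2) ^ 2 := by
    linear_combination -(1 / 4) * sq_sqrt (show (0 : ℝ) ≤ 5 by norm_num)
  have hdouble : 2 * sin (2 * (π / 5)) = (1 + √5) / 2 * (2 * sin (π / 5)) := by
    rw [sin_two_mul, cos_pi_div_five]
    ring
  rw [hdouble, log_mul (by positivity) (by positivity), hsq, log_pow]
  push_cast
  ring

theorem sum_cos_mul_log_two_mul_sin_five :
    ∑ j ∈ Ico (1 : ℕ) 5, cos (2 * π * j * 4 / 5) * log (2 * sin (π * j / 5)) =
      -(1 / 4) * log 5 - √5 / 4 * log ((3 + √5) / 2) := by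
  have hc₁ : cos (2 * π * (1 : ℕ) * 4 / 5) = (√5 - 1) / 4 := by
    rw [← cos_two_mul_pi_div_five, ← cos_two_pi_sub]
    push_cast
    ring_nf
  have hc₂ : cos (2 * π * (2 : ℕ) * 4 / 5) = -((1 + √5) / 4) := by
    rw [← cos_pi_div_five, ← cos_add_pi, ← cos_add_two_pi (π / 5 + π)]
    push_cast
    ring_nf
  have hc₃ : cos (2 * π * (3 : ℕ) * 4 / 5) = -((1 + √5) / 4) := by
    rw [← cos_pi_div_five, ← cos_pi_sub, ← cos_add_nat_mul_two_pi (π - π / 5) 2]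
    push_cast
    ring_nf
  have hc₄ : cos (2 * π * (4 : ℕ) * 4 / 5) = (√5 - 1) / 4 := by
    rw [← cos_two_mul_pi_div_five, ← cos_add_nat_mul_two_pi (2 * (π / 5)) 3]
    push_cast
    ring_nf
  rw [sum_mul_log_two_mul_sin_five fun j ↦ cos (2 * π * j * 4 / 5), hc₁, hc₂, hc₃, hc₄]
  linear_combination -(1 / 2) * log_two_mul_sin_pi_div_five_add
    - (√5 / 2) * log_two_mul_sin_pi_div_five_sub

end

theorem digamma_four_fifths :
    digamma (4 / 5) =
      -Real.eulerMascheroniConstant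
        + (Real.pi / 2) * Real.sqrt (1 + 2 / Real.sqrt 5)
        - (5 / 4) * Real.log 5
        - (Real.sqrt 5 / 4) * Real.log ((3 + Real.sqrt 5) / 2) := by
  have hcot : Real.cot (Real.pi * (4 / 5)) = -Real.sqrt (1 + 2 / Real.sqrt 5) := by
    rw [show Real.pi * (4 / 5) = Real.pi - Real.pi / 5 by ring, Real.cot_eq_cos_div_sin,
      Real.cos_pi_sub, Real.sin_pi_sub, neg_div, ← Real.cot_eq_cos_div_sin, cot_pi_div_five]
  have hgauss := digamma_natCast_div_natCast (p := 4) (q := 5) (by norm_num) (by norm_num)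
  push_cast at hgauss
  rw [hgauss, sum_cos_mul_log_two_mul_sin_five, hcot]
  ring
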